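/- Let X_0 and X_1 be real Banach spaces and ι : X_1 → X_0 a compact bounded linear operator. Fix κ ∈ [0, 1/2), L > 0, and let N ≥ 2 be a natural number such that the image under ι of the closed unit ball of X_1 can be covered by N balls of radius (1−2κ)/(4L) in X_0. Let 𝔹 ⊆ X_0 be contained in the closed ball of radius R > 0 centered at a point x_0 ∈ 𝔹. For each n ∈ ℤ let U(n) : 𝔹 → 𝔹 be an admissible map, i.e. U(n) = ι∘C(n) + 𝓛(n) where C(n) : 𝔹 → X_1 is L-Lipschitz from the X_0-norm to the X_1-norm on 𝔹 and 𝓛(n) : 𝔹 → X_0 is κ-Lipschitz in the X_0-norm on 𝔹; for m ≥ n set U(m, n) := U(m−1)∘⋯∘U(n) (with U(n, n) = id). Then there exists a family of sets M(n) ⊆ 𝔹, n ∈ ℤ, such that dist_{X_0}(U(n, n−k)(𝔹), M(n)) ≤ R·(κ + 1/2)^k for all n ∈ ℤ and k ∈ ℕ, and such that for every ε ∈ (0, R], each M(n) can be covered by at most (k(ε)+1)² · N^{k(ε)+1} balls of radius ε in X_0, where k(ε) denotes the smallest positive integer k with R·(κ + 1/2)^k ≤ ε; in particular this covering bound is independent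 of n ∈ ℤ. -/

import Mathlib

/-!
If `V ⊆ A` is an `r`-net of `A` and `T` is a `δ`-net of the image of the unit ball under `ι`, then
an admissible map `f` sends `closedBall v r ∩ A`, for `v ∈ V`, into the sum of `f v`, the set
`ι (closedBall 0 (L * r))` and a ball of radius `κ * r`. So `f v + (L * r) • t`, for `v ∈ V` and
`t ∈ T`, form a `(κ + L * δ) * r`-net of `f '' A`, whose centers can be moved into `f '' A` at the
price of doubling the radius. Starting from a single ball of radius `R` and iterating gives nets
`V k ⊆ U(n, n-k)(𝔹)` with at most `N ^ k` points and radius `R * q ^ k`, where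
`q = 2 * (κ + L * δ)`; for `δ = (1 - 2 * κ) / (4 * L)` this is `q = κ + 1/2`.

The set `M n` is the union of all these nets. Since `U(n, n-k)(𝔹)` decreases in `k`, the points of
`V j` with `j ≥ k` are within `R * q ^ k` of `V k`, so that `V 0 ∪ ⋯ ∪ V k` is already an
`R * q ^ k`-net of `M n`.
-/

open Metric Set
open scoped NNReal Pointwise

section Covering

variable {X : Type*}

theorem encard_add_le [Add X] (s t : Set X) : (s + t).encard ≤ s.encard * t.encard := by
  rw [← image2_add, ← image_prod, ← encard_prod]
  exact encard_image_le _ _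

theorem exists_subset_isCover_of_antitone [PseudoEMetricSpace X] {A : ℕ → Set X}
    (hA : Antitone A) {r : ℕ → ℝ≥0} (hfin : ∀ k, coveringNumber (r k) (A k) ≠ ⊤) :
    ∃ M ⊆ A 0, (∀ k, IsCover (r k) (A k) M) ∧
      ∀ k, coveringNumber (r k) M ≤
        ∑ j ∈ Finset.range (k + 1), coveringNumber (r j) (A j) := by
  let V : ℕ → Set X := fun j ↦ minimalCover (r j) (A j)
  have hVA (j : ℕ) : V j ⊆ A j := minimalCover_subset
  have hV (j : ℕ) : IsCover (r j) (A j) (V j) := isCover_minimalCover (hfin j)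
  refine ⟨⋃ j, V j, iUnion_subset fun j ↦ (hVA j).trans (hA (Nat.zero_le j)),
    fun k ↦ (hV k).mono (subset_iUnion V k), fun k ↦ ?_⟩
  have hcover : IsCover (r k) (⋃ j, V j) (⋃ j ∈ Finset.range (k + 1), V j) := by
    intro v hv
    obtain ⟨j, hj⟩ := mem_iUnion.1 hv
    rcases lt_or_ge j k with hjk | hkj
    · exact ⟨v, mem_biUnion (Finset.mem_range.2 (by lia)) hj, by simp⟩
    · obtain ⟨u, hu, hvu⟩ := hV k (hA hkj (hVA j hj))
      exact ⟨u, mem_biUnion (Finset.self_mem_range_succ k) hu, hvu⟩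
  calc coveringNumber (r k) (⋃ j, V j)
      ≤ (⋃ j ∈ Finset.range (k + 1), V j).encard :=
        hcover.coveringNumber_le_encard (iUnion₂_subset fun j _ ↦ subset_iUnion V j)
    _ ≤ ∑ j ∈ Finset.range (k + 1), (V j).encard := Finset.set_encard_biUnion_le _ _
    _ = ∑ j ∈ Finset.range (k + 1), coveringNumber (r j) (A j) :=
        Finset.sum_congr rfl fun j _ ↦ encard_minimalCover (hfin j)

theorem exists_fin_subset_iUnion_closedBall [PseudoMetricSpace X] {M : Set X} {r : ℝ≥0} {b : ℕ}
    (hM : coveringNumber r M ≤ b) {ε : ℝ} (hr : r ≤ ε) :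
    ∃ (m : ℕ) (c : Fin m → X), m ≤ b ∧ M ⊆ ⋃ i, closedBall (c i) ε := by
  obtain ⟨W, -, hWfin, hW, hcard⟩ :=
    exists_set_encard_eq_coveringNumber (ne_top_of_le_ne_top (ENat.natCast_ne_top b) hM)
  obtain ⟨m, c, rfl⟩ := hWfin.fin_embedding
  refine ⟨m, c, ?_, ?_⟩
  · have hm : (range c).encard = m := by rw [← image_univ, c.injective.encard_image]; simp
    exact_mod_cast hm.ge.trans (hcard.trans_le hM)
  · rw [← biUnion_range (f := c) (g := fun x ↦ closedBall x ε)]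
    exact hW.subset_iUnion_closedBall.trans
      (iUnion₂_mono fun x _ ↦ closedBall_subset_closedBall hr)

theorem coveringNumber_le_one_of_subset_closedBall [PseudoMetricSpace X] {s : Set X} {x : X}
    {r : ℝ≥0} (hx : x ∈ s) (hs : s ⊆ closedBall x r) : coveringNumber r s ≤ 1 := by
  have hcover : IsCover r s {x} := .of_subset_iUnion_closedBall (by simpa using hs)
  simpa using hcover.coveringNumber_le_encard (singleton_subset_iff.2 hx)

end Covering

section Admissible

variable {X Y Z : Type*} [SeminormedAddCommGroup X] [NormedSpace ℝ X]
  [NormedAddCommGroup Y] [NormedSpace ℝ Y]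

/-- Admissible maps: on `s`, `f` splits as `ι ∘ C + 𝓛`, where `C` is `L`-Lipschitz into the smoother
space `Y` and `𝓛` is `κ`-Lipschitz. Nothing is required outside `s`; the decomposition is
existential because covering estimates only see the two constants. -/
def IsAdmissibleOn [PseudoEMetricSpace Z] (ι : Y →ₗ[ℝ] X) (L κ : ℝ≥0) (f : Z → X) (s : Set Z) :
    Prop :=
  ∃ (C : Z → Y) (𝓛 : Z → X), LipschitzOnWith L C s ∧ LipschitzOnWith κ 𝓛 s ∧
    ∀ x ∈ s, f x = ι (C x) + 𝓛 x

theorem IsAdmissibleOn.mono [PseudoEMetricSpace Z] {ι : Y →ₗ[ℝ] X} {L κ : ℝ≥0} {f : Z → X}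
    {s t : Set Z} (hf : IsAdmissibleOn ι L κ f t) (hst : s ⊆ t) : IsAdmissibleOn ι L κ f s :=
  let ⟨C, 𝓛, hC, h𝓛, hdecomp⟩ := hf
  ⟨C, 𝓛, hC.mono hst, h𝓛.mono hst, fun x hx ↦ hdecomp x (hst hx)⟩

theorem isAdmissibleOn_of_norm_sub_le {W : Type*} [SeminormedAddCommGroup W] {ι : Y →ₗ[ℝ] X}
    {L κ : ℝ≥0} {f : W → X} {s : Set W} {C : W → Y} {𝓛 : W → X}
    (hC : ∀ x ∈ s, ∀ z ∈ s, ‖C x - C z‖ ≤ L * ‖x - z‖)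
    (h𝓛 : ∀ x ∈ s, ∀ z ∈ s, ‖𝓛 x - 𝓛 z‖ ≤ κ * ‖x - z‖)
    (hf : ∀ x ∈ s, f x = ι (C x) + 𝓛 x) : IsAdmissibleOn ι L κ f s := by
  simp only [← dist_eq_norm] at hC h𝓛
  exact ⟨C, 𝓛, .of_dist_le_mul hC, .of_dist_le_mul h𝓛, hf⟩

theorem isCover_image_closedBall {ι : Y →ₗ[ℝ] X} {δ : ℝ≥0} {T : Set X}
    (hT : IsCover δ (ι '' closedBall 0 1) T) (r : ℝ≥0) :
    IsCover (r * δ) (ι '' closedBall 0 r) (r • T) := by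
  rw [← smul_unitClosedBall_of_nonneg r.coe_nonneg, image_smul_set]
  simpa using! hT.image_lipschitz (lipschitzWith_smul (r : ℝ))

variable {ι : Y →ₗ[ℝ] X} {L κ δ : ℝ≥0} {T : Set X}

theorem IsAdmissibleOn.isCover_image [PseudoEMetricSpace Z] {f : Z → X} {s V : Set Z} {r : ℝ≥0}
    (hf : IsAdmissibleOn ι L κ f s) (hT : IsCover δ (ι '' closedBall 0 1) T)
    (hVs : V ⊆ s) (hV : IsCover r s V) :
    IsCover ((κ + L * δ) * r) (f '' s) (f '' V + (L * r) • T) := by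
  obtain ⟨C, 𝓛, hC, h𝓛, hdecomp⟩ := hf
  rintro _ ⟨x, hx, rfl⟩
  obtain ⟨v, hv, hxv⟩ := hV hx
  have hCxv : C x - C v ∈ closedBall 0 (L * r : ℝ≥0) := by
    rw [mem_closedBall_zero_iff, ← dist_eq_norm, dist_le_coe, ← edist_le_coe, ENNReal.coe_mul]
    exact (hC hx (hVs hv)).trans (by gcongr; exact hxv)
  obtain ⟨t, ht, hxt⟩ := isCover_image_closedBall hT (L * r) (mem_image_of_mem ι hCxv)
  refine ⟨f v + t, add_mem_add (mem_image_of_mem f hv) ht, ?_⟩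
  have hfx : f x = ι (C x - C v) + (ι (C v) + 𝓛 x) := by
    rw [hdecomp x hx, map_sub]; abel
  have hfv : f v + t = t + (ι (C v) + 𝓛 v) := by
    rw [hdecomp v (hVs hv), add_comm]
  calc edist (f x) (f v + t)
      = edist (ι (C x - C v) + (ι (C v) + 𝓛 x)) (t + (ι (C v) + 𝓛 v)) := by rw [hfx, hfv]
    _ ≤ edist (ι (C x - C v)) t + edist (𝓛 x) (𝓛 v) :=
        (edist_add_add_le _ _ _ _).trans_eq (by rw [edist_add_left])
    _ ≤ ↑(L * r * δ) + κ * r := by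
        gcongr
        · exact hxt
        · exact (h𝓛 hx (hVs hv)).trans (by gcongr; exact hxv)
    _ = ↑((κ + L * δ) * r) := by push_cast; ring

theorem IsAdmissibleOn.coveringNumber_image_le [PseudoEMetricSpace Z] {f : Z → X} {s : Set Z}
    (hf : IsAdmissibleOn ι L κ f s) (hT : IsCover δ (ι '' closedBall 0 1) T) (r : ℝ≥0) :
    coveringNumber (2 * (κ + L * δ) * r) (f '' s) ≤ coveringNumber r s * T.encard := by
  rcases eq_or_ne (coveringNumber r s) ⊤ with htop | hfin
  · have hTne : T.Nonempty :=
      SetRel.IsCover.nonempty hT ((nonempty_closedBall.2 zero_le_one).image ι)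
    simp [htop, ENat.top_mul, hTne.ne_empty]
  · rw [mul_assoc, ← encard_minimalCover hfin]
    set V := minimalCover r s
    calc coveringNumber (2 * ((κ + L * δ) * r)) (f '' s)
        ≤ externalCoveringNumber ((κ + L * δ) * r) (f '' s) :=
          coveringNumber_two_mul_le_externalCoveringNumber _ _
      _ ≤ (f '' V + (L * r) • T).encard :=
          (hf.isCover_image hT minimalCover_subset
            (isCover_minimalCover hfin)).externalCoveringNumber_le_encard
      _ ≤ (f '' V).encard * ((L * r) • T).encard := encard_add_le _ _
      _ ≤ V.encard * T.encard := mul_le_mul' (encard_image_le _ _) (encard_image_le _ _)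

end Admissible

section Pullback

/-- The pullback image `U(n, n-k)(s)`: the states at time `n` of the process with one-step maps `U`
started in `s` at time `n - k`. The elapsed time `k` comes before `n`, which varies in the
recursion. -/
def pullbackImage {X : Type*} (U : ℤ → X → X) (s : Set X) : ℕ → ℤ → Set X
  | 0, _ => s
  | k + 1, n => U (n - 1) '' pullbackImage U s k (n - 1)

theorem image_eq_pullbackImage {X : Type*} {U : ℤ → X → X} {Φ : ℤ → ℕ → X → X}
    (hΦ_zero : ∀ n, Φ n 0 = id) (hΦ_succ : ∀ n k, Φ n (k + 1) = U (n - 1) ∘ Φ (n - 1) k)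
    (s : Set X) (k : ℕ) (n : ℤ) : Φ n k '' s = pullbackImage U s k n := by
  induction k generalizing n with
  | zero => simp [hΦ_zero, pullbackImage]
  | succ k ih => rw [hΦ_succ, image_comp, ih, pullbackImage]

theorem antitone_pullbackImage {X : Type*} {U : ℤ → X → X} {s : Set X}
    (hU : ∀ n, MapsTo (U n) s s) (n : ℤ) : Antitone fun k ↦ pullbackImage U s k n := by
  refine antitone_nat_of_succ_le fun k ↦ ?_
  induction k generalizing n with
  | zero => exact (hU (n - 1)).image_subset
  | succ k ih => exact image_mono (ih (n - 1))

variable {X Y : Type*} [SeminormedAddCommGroup X] [NormedSpace ℝ X]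
  [NormedAddCommGroup Y] [NormedSpace ℝ Y] {ι : Y →ₗ[ℝ] X} {L κ δ : ℝ≥0} {T s : Set X}
  {U : ℤ → X → X}

theorem coveringNumber_pullbackImage_le (hT : IsCover δ (ι '' closedBall 0 1) T)
    (hU : ∀ n, MapsTo (U n) s s) (hadm : ∀ n, IsAdmissibleOn ι L κ (U n) s) (r : ℝ≥0)
    (k : ℕ) (n : ℤ) :
    coveringNumber (r * (2 * (κ + L * δ)) ^ k) (pullbackImage U s k n) ≤
      coveringNumber r s * T.encard ^ k := by
  induction k generalizing n with
  | zero => simp [pullbackImage]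
  | succ k ih =>
    set q := 2 * (κ + L * δ)
    have hsub : pullbackImage U s k (n - 1) ⊆ s :=
      antitone_pullbackImage hU (n - 1) (Nat.zero_le k)
    calc coveringNumber (r * q ^ (k + 1)) (pullbackImage U s (k + 1) n)
        = coveringNumber (q * (r * q ^ k)) (U (n - 1) '' pullbackImage U s k (n - 1)) := by
          rw [pullbackImage]; ring_nf
      _ ≤ coveringNumber (r * q ^ k) (pullbackImage U s k (n - 1)) * T.encard :=
          ((hadm (n - 1)).mono hsub).coveringNumber_image_le hT _
      _ ≤ coveringNumber r s * T.encard ^ k * T.encard := by gcongr; exact ih (n - 1)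
      _ = coveringNumber r s * T.encard ^ (k + 1) := by rw [mul_assoc, pow_succ]

theorem exists_subset_isCover_pullbackImage (hT : IsCover δ (ι '' closedBall 0 1) T)
    (hTfin : T.Finite) (hU : ∀ n, MapsTo (U n) s s) (hadm : ∀ n, IsAdmissibleOn ι L κ (U n) s)
    {r : ℝ≥0} (hs : coveringNumber r s ≠ ⊤) (n : ℤ) :
    ∃ M ⊆ s, (∀ k, IsCover (r * (2 * (κ + L * δ)) ^ k) (pullbackImage U s k n) M) ∧
      ∀ k, coveringNumber (r * (2 * (κ + L * δ)) ^ k) M ≤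
        coveringNumber r s * ∑ j ∈ Finset.range (k + 1), T.encard ^ j := by
  have hbound := fun k ↦ coveringNumber_pullbackImage_le hT hU hadm r k n
  have hfin : ∀ k, coveringNumber (r * (2 * (κ + L * δ)) ^ k) (pullbackImage U s k n) ≠ ⊤ :=
    fun k ↦ ne_top_of_le_ne_top
      (WithTop.mul_ne_top hs (WithTop.pow_ne_top (encard_ne_top_iff.2 hTfin))) (hbound k)
  obtain ⟨M, hMs, hcover, hM⟩ :=
    exists_subset_isCover_of_antitone (antitone_pullbackImage hU n) hfin
  refine ⟨M, hMs, hcover, fun k ↦ (hM k).trans ?_⟩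
  rw [Finset.mul_sum]
  exact Finset.sum_le_sum fun j _ ↦ hbound j

end Pullback

theorem exists_one_le_mul_pow_le (R : ℝ) {q ε : ℝ} (hq₀ : 0 ≤ q) (hq₁ : q < 1) (hε : 0 < ε) :
    ∃ k : ℕ, 1 ≤ k ∧ R * q ^ k ≤ ε := by
  have hlim := (tendsto_pow_atTop_nhds_zero_of_lt_one hq₀ hq₁).const_mul R
  rw [mul_zero] at hlim
  exact ((Filter.eventually_ge_atTop 1).and (hlim.eventually_le_const hε)).exists

theorem exponential_attractor_covering_bound_general
    {X₀ X₁ : Type*} [SeminormedAddCommGroup X₀] [NormedSpace ℝ X₀]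
    [NormedAddCommGroup X₁] [NormedSpace ℝ X₁] (ι : X₁ →ₗ[ℝ] X₀)
    {κ L δ q R : ℝ} (hκ : 0 ≤ κ) (hL : 0 ≤ L) (hq : q = 2 * (κ + L * δ)) (hq₁ : q < 1)
    {N : ℕ} {y : Fin N → X₀} (hy : ι '' closedBall 0 1 ⊆ ⋃ i, closedBall (y i) δ)
    {x₀ : X₀} {𝔹 : Set X₀} (hx₀ : x₀ ∈ 𝔹) (h𝔹 : 𝔹 ⊆ closedBall x₀ R)
    {U : ℤ → X₀ → X₀} (hU𝔹 : ∀ n, ∀ x ∈ 𝔹, U n x ∈ 𝔹) {C : ℤ → X₀ → X₁} {𝓛 : ℤ → X₀ → X₀}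
    (hU : ∀ n, ∀ x ∈ 𝔹, U n x = ι (C n x) + 𝓛 n x)
    (hC : ∀ n, ∀ ξ₁ ∈ 𝔹, ∀ ξ₂ ∈ 𝔹, ‖C n ξ₁ - C n ξ₂‖ ≤ L * ‖ξ₁ - ξ₂‖)
    (h𝓛 : ∀ n, ∀ ξ₁ ∈ 𝔹, ∀ ξ₂ ∈ 𝔹, ‖𝓛 n ξ₁ - 𝓛 n ξ₂‖ ≤ κ * ‖ξ₁ - ξ₂‖)
    {Φ : ℤ → ℕ → X₀ → X₀} (hΦ_zero : ∀ n, Φ n 0 = id)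
    (hΦ_succ : ∀ n k, Φ n (k + 1) = U (n - 1) ∘ Φ (n - 1) k) :
    ∃ M : ℤ → Set X₀,
      (∀ n, M n ⊆ 𝔹) ∧
      (∀ (n : ℤ) (k : ℕ), ∀ x ∈ Φ n k '' 𝔹, ∃ z ∈ M n, ‖x - z‖ ≤ R * q ^ k) ∧
      (∀ ε : ℝ, 0 < ε → ∀ n : ℤ, ∃ (m : ℕ) (c : Fin m → X₀),
        m ≤ ∑ j ∈ Finset.range (sInf {k : ℕ | 1 ≤ k ∧ R * q ^ k ≤ ε} + 1), N ^ j ∧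
        M n ⊆ ⋃ i, closedBall (c i) ε) := by
  obtain ⟨i, hi⟩ := mem_iUnion.1 (hy ⟨0, by simp, map_zero ι⟩)
  lift δ to ℝ≥0 using dist_nonneg.trans hi
  lift κ to ℝ≥0 using hκ
  lift L to ℝ≥0 using hL
  lift R to ℝ≥0 using dist_nonneg.trans (h𝔹 hx₀)
  have hT : IsCover δ (ι '' closedBall 0 1) (range y) :=
    .of_subset_iUnion_closedBall (by simpa using hy)
  have hTcard : (range y).encard ≤ N := by simpa using encard_image_le y univ
  have hadm (n : ℤ) : IsAdmissibleOn ι L κ (U n) 𝔹 :=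
    isAdmissibleOn_of_norm_sub_le (hC n) (h𝓛 n) (hU n)
  have h𝔹one : coveringNumber R 𝔹 ≤ 1 := coveringNumber_le_one_of_subset_closedBall hx₀ h𝔹
  choose M hM𝔹 hattract hcover using exists_subset_isCover_pullbackImage hT (finite_range y) hU𝔹
    hadm (ne_top_of_le_ne_top ENat.one_ne_top h𝔹one)
  refine ⟨M, hM𝔹, fun n k x hx ↦ ?_, fun ε hε n ↦ ?_⟩
  · rw [image_eq_pullbackImage hΦ_zero hΦ_succ] at hx
    obtain ⟨z, hz, hxz⟩ := mem_iUnion₂.1 ((hattract n k).subset_iUnion_closedBall hx)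
    exact ⟨z, hz, by simpa [dist_eq_norm, hq] using hxz⟩
  · obtain ⟨-, hk⟩ := Nat.sInf_mem (exists_one_le_mul_pow_le R (hq ▸ by positivity) hq₁ hε)
    set k := sInf {k : ℕ | 1 ≤ k ∧ R * q ^ k ≤ ε}
    refine exists_fin_subset_iUnion_closedBall (r := R * (2 * (κ + L * δ)) ^ k) ?_ ?_
    · calc coveringNumber (R * (2 * (κ + L * δ)) ^ k) (M n)
          ≤ coveringNumber R 𝔹 * ∑ j ∈ Finset.range (k + 1), (range y).encard ^ j := hcover n k
        _ ≤ 1 * ∑ j ∈ Finset.range (k + 1), (N : ℕ∞) ^ j := by gcongr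
        _ = (∑ j ∈ Finset.range (k + 1), N ^ j : ℕ) := by push_cast; exact one_mul _
    · push_cast
      rwa [← hq]

theorem sum_range_succ_pow_le_sq_mul_pow {N : ℕ} (hN : 2 ≤ N) (k : ℕ) :
    ∑ j ∈ Finset.range (k + 1), N ^ j ≤ (k + 1) ^ 2 * N ^ (k + 1) :=
  (Nat.geomSum_lt hN fun _ ↦ Finset.mem_range.1).le.trans
    (Nat.le_mul_of_pos_left _ (by positivity))

/-- Quantitative covering bound for the exponential attractor.
Under the admissible-decomposition assumptions on the processes `U(n) : 𝔹 → 𝔹`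
(with `Ucomp n k = U(n-1) ∘ ⋯ ∘ U(n-k)`, so that `U(n, n-k)(𝔹) = Ucomp n k '' 𝔹`), there is
a family of sets `M(n) ⊆ 𝔹`, `n ∈ ℤ`, with
`dist_{X₀}(U(n, n-k)(𝔹), M(n)) ≤ R·(κ + 1/2)^k` for all `n ∈ ℤ`, `k ∈ ℕ`, and such that for
every `ε ∈ (0, R]` each `M(n)` can be covered by at most `(k(ε)+1)² · N^(k(ε)+1)` closed
balls of radius `ε` in `X₀`, where `k(ε)` is the smallest positive integer `k` with
`R·(κ + 1/2)^k ≤ ε`; the bound is independent of `n`. -/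
theorem exponential_attractor_covering_bound
    (X₀ X₁ : Type*) [NormedAddCommGroup X₀] [NormedSpace ℝ X₀] [CompleteSpace X₀]
    [NormedAddCommGroup X₁] [NormedSpace ℝ X₁] [CompleteSpace X₁]
    (ι : X₁ →L[ℝ] X₀) (hι : IsCompactOperator ι)
    (κ L : ℝ) (hκ0 : 0 ≤ κ) (hκ : κ < 1/2) (hL : 0 < L)
    (N : ℕ) (hN2 : 2 ≤ N) (y : Fin N → X₀)
    (hN : ι '' Metric.closedBall 0 1 ⊆ ⋃ i, Metric.closedBall (y i) ((1 - 2*κ)/(4*L)))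
    (R : ℝ) (hR : 0 < R) (x₀ : X₀) (𝔹 : Set X₀) (hx₀ : x₀ ∈ 𝔹)
    (h𝔹 : 𝔹 ⊆ Metric.closedBall x₀ R)
    (U : ℤ → X₀ → X₀) (hU𝔹 : ∀ n, ∀ x ∈ 𝔹, U n x ∈ 𝔹)
    (C : ℤ → X₀ → X₁) (𝓛 : ℤ → X₀ → X₀)
    (hU : ∀ n, ∀ x ∈ 𝔹, U n x = ι (C n x) + 𝓛 n x)
    (hC : ∀ n, ∀ ξ₁ ∈ 𝔹, ∀ ξ₂ ∈ 𝔹, ‖C n ξ₁ - C n ξ₂‖ ≤ L * ‖ξ₁ - ξ₂‖)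
    (h𝓛 : ∀ n, ∀ ξ₁ ∈ 𝔹, ∀ ξ₂ ∈ 𝔹, ‖𝓛 n ξ₁ - 𝓛 n ξ₂‖ ≤ κ * ‖ξ₁ - ξ₂‖)
    (Ucomp : ℤ → ℕ → X₀ → X₀)
    (hU0 : ∀ n, Ucomp n 0 = id)
    (hUsucc : ∀ n k, Ucomp n (k + 1) = U (n - 1) ∘ Ucomp (n - 1) k) :
    ∃ M : ℤ → Set X₀,
      (∀ n, M n ⊆ 𝔹) ∧
      (∀ (n : ℤ) (k : ℕ), ∀ x ∈ Ucomp n k '' 𝔹,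
        ∃ z ∈ M n, ‖x - z‖ ≤ R * (κ + 1/2) ^ k) ∧
      (∀ ε : ℝ, 0 < ε → ε ≤ R → ∀ n : ℤ,
        ∃ (m : ℕ) (c : Fin m → X₀),
          m ≤ (sInf {k : ℕ | 1 ≤ k ∧ R * (κ + 1/2) ^ k ≤ ε} + 1) ^ 2 *
              N ^ (sInf {k : ℕ | 1 ≤ k ∧ R * (κ + 1/2) ^ k ≤ ε} + 1) ∧
          M n ⊆ ⋃ i, Metric.closedBall (c i) ε) := by
  obtain ⟨M, hM𝔹, hattract, hcover⟩ := exponential_attractor_covering_bound_general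
    (ι : X₁ →ₗ[ℝ] X₀) (q := κ + 1 / 2) hκ0 hL.le (by field_simp; ring) (by linarith) hN hx₀ h𝔹
    hU𝔹 hU hC h𝓛 hU0 hUsucc
  exact ⟨M, hM𝔹, hattract, fun ε hε _ n ↦ let ⟨m, c, hm, hc⟩ := hcover ε hε n
    ⟨m, c, hm.trans (sum_range_succ_pow_le_sq_mul_pow hN2 _), hc⟩⟩
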